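/- Let (Δ,σ₁,σ₂) and (Δ′,σ₁′,σ₂′) be canonical normal double σ-systems of 𝔱 and 𝔱′ respectively. Then (Δ,σ₁,σ₂) ∼ (Δ′,σ₁′,σ₂′) if and only if there exists a linear isomorphism φ : 𝔱 → 𝔱′ with φ(Δ) = Δ′ satisfying σᵢ′ = φσᵢφ⁻¹ for both i = 1 and i = 2. In particular, if (Δ,σ₁,σ₂) ∼ (Δ′,σ₁′,σ₂′), then dim(𝔱^{σ₁} ∩ 𝔱^{σ₂}) = dim(𝔱′^{σ₁′} ∩ 𝔱′^{σ₂′}) and ord(σ₁σ₂) = ord(σ₁′σ₂′). -/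

import Mathlib

/-!
The proof rests on two facts about the Weyl group `W` of a root system `Δ`.

* For a normal `σ`-system, the centraliser of `σ` in `W` acts transitively on the positive systems
  of `σ`-fundamental systems (`exists_commuting_weyl`). Positive systems are encoded by regular
  vectors `d`, as `{α ∈ Δ | 0 < ⟪d, α⟫}`. Given `d` and `d'`, an element `u` of the centraliser
  maximising `⟪d, u d'⟫` matches the two positive systems. Indeed, normality implies that a root
  `α` with `σ α ≠ ± α` is orthogonal to `σ α` or has `α + σ α ∈ Δ` (`orthogonal_or_add_mem`), so
  one of `w_α`, `w_α w_{σ α}`, `w_{α + σ α}` commutes with `σ` and would increase the value if `d`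
  and `u d'` had opposite signs on `α`.
* `W` acts freely on positive systems (`weyl_eq_one`), by the exchange condition for words in the
  simple reflections.

Let `φ` and `w` realise an isomorphism of canonical systems, and put `τ = φ σ₂ φ⁻¹`, so that
`σ₂' = w τ w⁻¹`. The positive system `P` transported by `φ` is compatible with `σ₁'` and `τ`, hence
`w P` is compatible with `σ₂'`. If `P'` is a positive system compatible with `σ₁'` and `σ₂'`,
transitivity yields `u ∈ W` commuting with `σ₁'` with `u P = P'`, and `v ∈ W` commuting with `σ₂'`
with `v w P = P'`. Freeness gives `v w = u`, so `u φ` conjugates `σ₁` to `σ₁'`, and `σ₂` to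
`v w τ w⁻¹ v⁻¹ = v σ₂' v⁻¹ = σ₂'`. The equalities of dimensions and orders are then immediate.
-/

noncomputable section

section SigmaSystems

variable {V : Type*} [AddCommGroup V] [Module ℝ V]
variable {V' : Type*} [AddCommGroup V'] [Module ℝ V']

/-- `Δ` is a reduced root system of `V` with respect to the inner product `b`. -/
def IsReducedRootSystem (b : V → V → ℝ) (Δ : Set V) : Prop :=
  Δ.Finite ∧ (0 : V) ∉ Δ ∧ Submodule.span ℝ Δ = ⊤ ∧
  (∀ α ∈ Δ, ∀ β ∈ Δ,
    β - (2 * b α β / b α α) • α ∈ Δ ∧ ∃ n : ℤ, 2 * b α β / b α α = (n : ℝ)) ∧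
  (∀ α ∈ Δ, ∀ β ∈ Δ, ∀ m : ℝ, β = m • α → m = 1 ∨ m = -1)

/-- the Weyl group of `Δ`: the group generated by the reflections `w_α`, `α ∈ Δ` -/
def WeylGroup (b : V → V → ℝ) (Δ : Set V) : Subgroup (V ≃ₗ[ℝ] V) :=
  Subgroup.closure
    {w : V ≃ₗ[ℝ] V | ∃ α ∈ Δ, ∀ x, w x = x - (2 * b α x / b α α) • α}

/-- `(Δ,σ)` is a `σ`-system: `σ` is an involutive linear isometry preserving `Δ`. -/
def IsSigmaSystem (b : V → V → ℝ) (Δ : Set V) (σ : V →ₗ[ℝ] V) : Prop :=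
  (∀ x, σ (σ x) = x) ∧ (∀ x y, b (σ x) (σ y) = b x y) ∧ σ '' Δ = Δ

/-- normality of a `σ`-system: `σ(α) - α ∉ Δ` for all `α ∈ Δ` -/
def IsNormalSigma (Δ : Set V) (σ : V →ₗ[ℝ] V) : Prop :=
  ∀ α ∈ Δ, σ α - α ∉ Δ

/-- the set of positive roots determined by a fundamental system `Φ`:
nonnegative integer combinations of elements of `Φ` lying in `Δ` -/
def posRoots (Δ Φ : Set V) : Set V :=
  {α | α ∈ Δ ∧ ∃ c : V →₀ ℤ, (↑c.support : Set V) ⊆ Φ ∧ (∀ β, 0 ≤ c β) ∧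
    α = c.sum fun β n => (n : ℝ) • β}

/-- `Φ` is a fundamental system (simple system) of the root system `Δ` -/
def IsFundamentalSystem (Δ Φ : Set V) : Prop :=
  Φ ⊆ Δ ∧ LinearIndependent ℝ (fun x : Φ => (x : V)) ∧
  ∀ α ∈ Δ, α ∈ posRoots Δ Φ ∨ -α ∈ posRoots Δ Φ

/-- `Φ` is a `σ`-fundamental system: a fundamental system with
`σ(α) ∈ Δ⁺` for every `α ∈ Δ⁺` with `σ(α) ≠ -α` -/
def IsSigmaFundamental (Δ Φ : Set V) (σ : V →ₗ[ℝ] V) : Prop :=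
  IsFundamentalSystem Δ Φ ∧
  ∀ α ∈ posRoots Δ Φ, σ α ≠ -α → σ α ∈ posRoots Δ Φ

/-- a double `σ`-system `(Δ,σ₁,σ₂)` is canonical if it admits a
simultaneous `(σ₁,σ₂)`-fundamental system -/
def IsCanonicalDoubleSigma (Δ : Set V) (σ₁ σ₂ : V →ₗ[ℝ] V) : Prop :=
  ∃ Φ : Set V, IsSigmaFundamental Δ Φ σ₁ ∧ IsSigmaFundamental Δ Φ σ₂

/-- isomorphism of double `σ`-systems: a root-system isomorphism `φ : V → V'` and a Weyl
group element `w ∈ W(Δ')` with `σ₁' = φσ₁φ⁻¹` and `σ₂' = wφσ₂φ⁻¹w⁻¹` -/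
def DoubleSigmaIso (b' : V' → V' → ℝ)
    (Δ : Set V) (σ₁ σ₂ : V →ₗ[ℝ] V)
    (Δ' : Set V') (σ₁' σ₂' : V' →ₗ[ℝ] V') : Prop :=
  ∃ φ : V ≃ₗ[ℝ] V', φ '' Δ = Δ' ∧
    σ₁' = φ.toLinearMap ∘ₗ σ₁ ∘ₗ φ.symm.toLinearMap ∧
    ∃ w ∈ WeylGroup b' Δ',
      σ₂' = w.toLinearMap ∘ₗ φ.toLinearMap ∘ₗ σ₂ ∘ₗ φ.symm.toLinearMap ∘ₗ
        w.symm.toLinearMap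

/-- the `(+1)`-eigenspace `V^σ` of an involution `σ` -/
def fixedSpace (σ : V →ₗ[ℝ] V) : Submodule ℝ V :=
  LinearMap.ker (σ - LinearMap.id)

end SigmaSystems

open scoped RealInnerProductSpace

/-! ### Reflections -/

section Reflections

variable {V : Type*} [NormedAddCommGroup V] [InnerProductSpace ℝ V]

/-- The orthogonal reflection `w_α` in the hyperplane `α⊥` (the identity when `α = 0`). -/
def rootRefl (α : V) : V ≃ₗ[ℝ] V := ((ℝ ∙ α)ᗮ.reflection).toLinearEquiv

lemma rootRefl_apply (α x : V) :
    rootRefl α x = x - (2 * ⟪α, x⟫ / ⟪α, α⟫) • α := by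
  have h : rootRefl α x = (ℝ ∙ α)ᗮ.reflection x := rfl
  rw [h, Submodule.reflection_orthogonal_apply, Submodule.reflection_singleton_apply,
    real_inner_self_eq_norm_sq, neg_sub, two_smul, ← add_smul]
  congr 2
  simp only [RCLike.ofReal_real_eq_id, id]
  ring

lemma rootRefl_rootRefl (α x : V) : rootRefl α (rootRefl α x) = x :=
  (ℝ ∙ α)ᗮ.reflection_reflection x

lemma rootRefl_mul_self (α : V) : rootRefl α * rootRefl α = 1 := by
  ext x; exact rootRefl_rootRefl α x

lemma rootRefl_inv (α : V) : (rootRefl α)⁻¹ = rootRefl α :=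
  inv_eq_of_mul_eq_one_left (rootRefl_mul_self α)

lemma inner_rootRefl (α x y : V) : ⟪rootRefl α x, rootRefl α y⟫ = ⟪x, y⟫ :=
  (ℝ ∙ α)ᗮ.reflection.inner_map_map x y

lemma rootRefl_self (α : V) : rootRefl α α = -α :=
  Submodule.reflection_orthogonalComplement_singleton_eq_neg α

lemma rootRefl_neg (α : V) : rootRefl (-α) = rootRefl α := by
  ext x
  simp only [rootRefl_apply, inner_neg_left, inner_neg_right, neg_neg, smul_neg, mul_neg, neg_div,
    neg_smul]

/-- Conjugating a reflection by an isometry gives the reflection in the image vector. -/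
lemma map_rootRefl (f : V →ₗ[ℝ] V) (hf : ∀ x y, ⟪f x, f y⟫ = ⟪x, y⟫) (α x : V) :
    f (rootRefl α x) = rootRefl (f α) (f x) := by
  simp only [rootRefl_apply, map_sub, map_smul, hf]

lemma rootRefl_conj (w : V ≃ₗ[ℝ] V) (hf : ∀ x y, ⟪w x, w y⟫ = ⟪x, y⟫) (α : V) :
    rootRefl (w α) = w * rootRefl α * w⁻¹ := by
  rw [eq_mul_inv_iff_mul_eq]
  ext x
  exact (map_rootRefl w.toLinearMap hf α x).symm

end Reflections

/-! ### Roots and the Weyl group -/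

section RootSystems

variable {V : Type*} [NormedAddCommGroup V] [InnerProductSpace ℝ V]
  {Δ Φ : Set V} {σ : V →ₗ[ℝ] V}

lemma IsReducedRootSystem.ne_zero (hΔ : IsReducedRootSystem (fun x y => ⟪x, y⟫) Δ) {α : V}
    (hα : α ∈ Δ) : α ≠ 0 := fun h => hΔ.2.1 (h ▸ hα)

lemma IsReducedRootSystem.inner_self_pos (hΔ : IsReducedRootSystem (fun x y => ⟪x, y⟫) Δ) {α : V}
    (hα : α ∈ Δ) : 0 < ⟪α, α⟫ := real_inner_self_pos.2 (hΔ.ne_zero hα)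

lemma IsReducedRootSystem.rootRefl_mem (hΔ : IsReducedRootSystem (fun x y => ⟪x, y⟫) Δ) {α β : V}
    (hα : α ∈ Δ) (hβ : β ∈ Δ) : rootRefl α β ∈ Δ := by
  rw [rootRefl_apply]; exact (hΔ.2.2.2.1 α hα β hβ).1

lemma IsReducedRootSystem.neg_mem (hΔ : IsReducedRootSystem (fun x y => ⟪x, y⟫) Δ) {α : V}
    (hα : α ∈ Δ) : -α ∈ Δ := by
  rw [← rootRefl_self]; exact hΔ.rootRefl_mem hα hα

lemma rootRefl_mem_weyl {α : V} (hα : α ∈ Δ) :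
    rootRefl α ∈ WeylGroup (fun x y => ⟪x, y⟫) Δ :=
  Subgroup.subset_closure ⟨α, hα, rootRefl_apply α⟩

lemma weyl_isometry {w : V ≃ₗ[ℝ] V} (hw : w ∈ WeylGroup (fun x y => ⟪x, y⟫) Δ) :
    ∀ x y, ⟪w x, w y⟫ = ⟪x, y⟫ := by
  induction hw using Subgroup.closure_induction with
  | mem w hw =>
    obtain ⟨α, -, hw⟩ := hw
    have : w = rootRefl α := by ext x; rw [hw, rootRefl_apply]
    exact this ▸ inner_rootRefl α
  | one => intro x y; rfl
  | mul u v _ _ hu hv => intro x y; exact (hu _ _).trans (hv x y)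
  | inv u _ hu =>
    intro x y
    have h (x : V) : u (u⁻¹ x) = x := u.apply_symm_apply x
    rw [← hu, h, h]

lemma weyl_mem_iff (hΔ : IsReducedRootSystem (fun x y => ⟪x, y⟫) Δ) {w : V ≃ₗ[ℝ] V}
    (hw : w ∈ WeylGroup (fun x y => ⟪x, y⟫) Δ) : ∀ x, w x ∈ Δ ↔ x ∈ Δ := by
  induction hw using Subgroup.closure_induction with
  | mem w hw =>
    obtain ⟨α, hα, hw⟩ := hw
    have : w = rootRefl α := by ext x; rw [hw, rootRefl_apply]
    subst this
    intro x
    refine ⟨fun h => ?_, hΔ.rootRefl_mem hα⟩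
    rw [← rootRefl_rootRefl α x]
    exact hΔ.rootRefl_mem hα h
  | one => intro x; rfl
  | mul u v _ _ hu hv => intro x; exact (hu _).trans (hv x)
  | inv u _ hu =>
    intro x
    rw [← hu, show u (u⁻¹ x) = x from u.apply_symm_apply x]

lemma weyl_finite (hΔ : IsReducedRootSystem (fun x y => ⟪x, y⟫) Δ) :
    (WeylGroup (fun x y => ⟪x, y⟫) Δ : Set (V ≃ₗ[ℝ] V)).Finite := by
  have : Finite Δ := hΔ.1
  let F : (WeylGroup (fun x y => ⟪x, y⟫) Δ) → (Δ → Δ) :=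
    fun w α => ⟨w.1 α, (weyl_mem_iff hΔ w.2 _).2 α.2⟩
  have hF : Function.Injective F := by
    intro u v huv
    apply Subtype.ext
    apply LinearEquiv.toLinearMap_injective
    -- a linear map is determined by its values on the roots, which span
    apply LinearMap.ext_on hΔ.2.2.1
    intro α hα
    exact congrArg Subtype.val (congrFun huv ⟨α, hα⟩)
  have := Finite.of_injective F hF
  exact Set.toFinite _

end RootSystems

/-! ### Transitivity of the centraliser of `σ` on `σ`-compatible positive systems -/

section Transitivity

variable {V : Type*} [NormedAddCommGroup V] [InnerProductSpace ℝ V]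
  {Δ : Set V} {σ : V →ₗ[ℝ] V}

/-- `d` is a regular vector whose positive system `{α ∈ Δ | 0 < ⟪d, α⟫}` has the defining property
of the positive system of a `σ`-fundamental system. -/
def IsSigmaRegular (Δ : Set V) (σ : V →ₗ[ℝ] V) (d : V) : Prop :=
  (∀ α ∈ Δ, ⟪d, α⟫ ≠ 0) ∧ ∀ α ∈ Δ, 0 < ⟪d, α⟫ → σ α ≠ -α → 0 < ⟪d, σ α⟫

/-- Weyl group elements carry `σ`-regular vectors to `wσw⁻¹`-regular vectors. -/
lemma IsSigmaRegular.map (hΔ : IsReducedRootSystem (fun x y => ⟪x, y⟫) Δ) {d : V}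
    (hd : IsSigmaRegular Δ σ d) {w : V ≃ₗ[ℝ] V} (hw : w ∈ WeylGroup (fun x y => ⟪x, y⟫) Δ)
    {τ : V →ₗ[ℝ] V} (hτ : ∀ x, τ (w x) = w (σ x)) : IsSigmaRegular Δ τ (w d) := by
  refine ⟨fun α hα => ?_, fun α hα hpos hne => ?_⟩ <;>
    obtain ⟨β, rfl⟩ := w.surjective α <;> rw [weyl_mem_iff hΔ hw] at hα
  · rw [weyl_isometry hw]; exact hd.1 β hα
  · rw [weyl_isometry hw] at hpos
    rw [hτ, weyl_isometry hw]
    refine hd.2 β hα hpos fun h => hne ?_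
    rw [hτ, h, map_neg]

/-- For a normal `σ`-system, a root `α` with `σ α ≠ ± α` is either orthogonal to `σ α`, or
`α + σ α` is a root: both roots have the same length, so the Cartan integer is `-1`, `0` or `1`,
and the value `1` would make `σ α - α` a root. -/
lemma orthogonal_or_add_mem (hΔ : IsReducedRootSystem (fun x y => ⟪x, y⟫) Δ)
    (hσ : IsSigmaSystem (fun x y => ⟪x, y⟫) Δ σ) (hn : IsNormalSigma Δ σ) {α : V} (hα : α ∈ Δ)
    (h1 : σ α ≠ α) (h2 : σ α ≠ -α) : ⟪α, σ α⟫ = 0 ∨ σ α + α ∈ Δ := by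
  have hσα : σ α ∈ Δ := hσ.2.2 ▸ Set.mem_image_of_mem σ hα
  obtain ⟨hmem, n, hn'⟩ := hΔ.2.2.2.1 α hα (σ α) hσα
  beta_reduce at hmem hn'
  have hpos := hΔ.inner_self_pos hα
  have hlen : ⟪σ α, σ α⟫ = ⟪α, α⟫ := hσ.2.1 α α
  -- strict Cauchy–Schwarz for two vectors of equal length
  have hm : 0 < ⟪σ α - α, σ α - α⟫ := real_inner_self_pos.2 (sub_ne_zero.2 h1)
  have hp : 0 < ⟪σ α + α, σ α + α⟫ :=
    real_inner_self_pos.2 fun h => h2 (eq_neg_of_add_eq_zero_left h)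
  rw [real_inner_sub_sub_self, hlen, real_inner_comm α (σ α)] at hm
  rw [real_inner_add_add_self, hlen, real_inner_comm α (σ α)] at hp
  have hn2 : (n : ℝ) < 2 := by
    rw [← hn', div_lt_iff₀ hpos]; linarith
  have hn3 : (-2 : ℝ) < n := by
    rw [← hn', lt_div_iff₀ hpos]; linarith
  have hn2' : n < 2 := by exact_mod_cast hn2
  have hn3' : -2 < n := by exact_mod_cast hn3
  simp only [hn'] at hmem
  obtain rfl | rfl | rfl : n = -1 ∨ n = 0 ∨ n = 1 := by omega
  · right; simpa using hmem
  · left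
    simp only [Int.cast_zero, div_eq_zero_iff] at hn'
    rcases hn' with h | h <;> linarith
  · exact absurd (by simpa using hmem) (hn α hα)

/-- The elements of the Weyl group commuting with `σ` act transitively on the `σ`-compatible
positive systems of a normal `σ`-system. The element `u` is chosen to maximise `⟪d, u d'⟫`; a root
on which `d` and `u d'` disagree would yield a `σ`-invariant reflection, or a product of two
orthogonal reflections swapped by `σ`, that increases this value. -/
lemma exists_commuting_weyl (hΔ : IsReducedRootSystem (fun x y => ⟪x, y⟫) Δ)
    (hσ : IsSigmaSystem (fun x y => ⟪x, y⟫) Δ σ) (hn : IsNormalSigma Δ σ) {d d' : V}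
    (hd : IsSigmaRegular Δ σ d) (hd' : IsSigmaRegular Δ σ d') :
    ∃ u ∈ WeylGroup (fun x y => ⟪x, y⟫) Δ, (∀ x, σ (u x) = u (σ x)) ∧
      ∀ α ∈ Δ, 0 < ⟪d, α⟫ → 0 < ⟪u d', α⟫ := by
  let S : Set (V ≃ₗ[ℝ] V) :=
    {u | u ∈ WeylGroup (fun x y => ⟪x, y⟫) Δ ∧ ∀ x, σ (u x) = u (σ x)}
  have hSfin : S.Finite := (weyl_finite hΔ).subset fun u hu => hu.1
  have hSne : S.Nonempty := ⟨1, one_mem _, fun x => rfl⟩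
  obtain ⟨u, ⟨huW, huσ⟩, humax⟩ := Set.exists_max_image S (fun u => ⟪d, u d'⟫) hSfin hSne
  refine ⟨u, huW, huσ, ?_⟩
  set y := u d' with hy
  have hyreg : IsSigmaRegular Δ σ y := hd'.map hΔ huW huσ
  -- maximality, applied to left multiples of `u`
  have hmax (s : V ≃ₗ[ℝ] V) (hs : s ∈ WeylGroup (fun x y => ⟪x, y⟫) Δ)
      (hsσ : ∀ x, σ (s x) = s (σ x)) : ⟪d, s y⟫ ≤ ⟪d, y⟫ :=
    humax (s * u) ⟨mul_mem hs huW, fun x => by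
      change σ (s (u x)) = s (u (σ x)); rw [hsσ, huσ]⟩
  have hsingle (β : V) (hβ : β ∈ Δ) (hσβ : σ β = β ∨ σ β = -β) (hpos : 0 < ⟪d, β⟫) :
      0 < ⟪y, β⟫ := by
    refine lt_of_le_of_ne ?_ (hyreg.1 β hβ).symm
    have h := hmax (rootRefl β) (rootRefl_mem_weyl hβ) fun x => by
      rw [map_rootRefl σ hσ.2.1]
      rcases hσβ with h | h <;> rw [h]
      rw [rootRefl_neg]
    rw [rootRefl_apply, inner_sub_right, inner_smul_right, sub_le_self_iff] at h
    have h' := nonneg_of_mul_nonneg_left h hpos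
    have hββ := hΔ.inner_self_pos hβ
    rw [le_div_iff₀ hββ, real_inner_comm y β] at h'
    linarith
  intro α hα hpos
  by_cases h1 : σ α = α
  · exact hsingle α hα (.inl h1) hpos
  by_cases h2 : σ α = -α
  · exact hsingle α hα (.inr h2) hpos
  have hσα : σ α ∈ Δ := hσ.2.2 ▸ Set.mem_image_of_mem σ hα
  have hdσ : 0 < ⟪d, σ α⟫ := hd.2 α hα hpos h2
  by_contra hneg
  have hyα : ⟪y, α⟫ < 0 := lt_of_le_of_ne (not_lt.1 hneg) (hyreg.1 α hα)
  have hyσ : ⟪y, σ α⟫ < 0 := by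
    have := hyreg.2 (-α) (hΔ.neg_mem hα) (by rw [inner_neg_right]; linarith)
      (by rw [map_neg]; exact fun h => h2 (neg_injective h))
    rw [map_neg, inner_neg_right] at this
    linarith
  rcases orthogonal_or_add_mem hΔ hσ hn hα h1 h2 with horth | hadd
  · have hcomm (x : V) : rootRefl α (rootRefl (σ α) x) = rootRefl (σ α) (rootRefl α x) := by
      have := map_rootRefl (rootRefl α).toLinearMap (inner_rootRefl α) (σ α) x
      have hfix : rootRefl α (σ α) = σ α := by rw [rootRefl_apply, horth]; simp
      simpa [hfix] using this
    have h := hmax (rootRefl α * rootRefl (σ α))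
      (mul_mem (rootRefl_mem_weyl hα) (rootRefl_mem_weyl hσα)) fun x => by
        change σ (rootRefl α (rootRefl (σ α) x)) = rootRefl α (rootRefl (σ α) (σ x))
        rw [map_rootRefl σ hσ.2.1, map_rootRefl σ hσ.2.1, hσ.1, hcomm]
    change ⟪d, rootRefl α (rootRefl (σ α) y)⟫ ≤ _ at h
    rw [rootRefl_apply, rootRefl_apply, inner_sub_right α, inner_smul_right α, horth] at h
    simp only [inner_sub_right, inner_smul_right, mul_zero, sub_zero] at h
    have e1 : 2 * ⟪σ α, y⟫ / ⟪σ α, σ α⟫ * ⟪d, σ α⟫ < 0 := by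
      refine mul_neg_of_neg_of_pos (div_neg_of_neg_of_pos ?_ (hΔ.inner_self_pos hσα)) hdσ
      rw [real_inner_comm]; linarith
    have e2 : 2 * ⟪α, y⟫ / ⟪α, α⟫ * ⟪d, α⟫ < 0 := by
      refine mul_neg_of_neg_of_pos (div_neg_of_neg_of_pos ?_ (hΔ.inner_self_pos hα)) hpos
      rw [real_inner_comm]; linarith
    linarith
  · have := hsingle _ hadd (.inl (by rw [map_add, hσ.1, add_comm]))
      (by rw [inner_add_right]; linarith)
    rw [inner_add_right] at this
    linarith

end Transitivity

/-! ### Simple reflections and freeness of the Weyl group action on positive systems -/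

section Freeness

variable {V : Type*} [NormedAddCommGroup V] [InnerProductSpace ℝ V] {Δ Φ : Set V}

/-- A vector can be chosen with prescribed inner products with the simple roots. -/
lemma exists_inner_eq [FiniteDimensional ℝ V] (hΦ : IsFundamentalSystem Δ Φ) (f : V → ℝ) :
    ∃ d : V, ∀ a ∈ Φ, ⟪d, a⟫ = f a := by
  have hli : LinearIndepOn ℝ id Φ := hΦ.2.1
  let B := Module.Basis.extend hli
  let ℓ : V →ₗ[ℝ] ℝ := B.constr ℝ fun i => f i
  refine ⟨(InnerProductSpace.toDual ℝ V).symm (LinearMap.toContinuousLinearMap ℓ),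
    fun a ha => ?_⟩
  rw [InnerProductSpace.toDual_symm_apply, LinearMap.coe_toContinuousLinearMap']
  have hB : B ⟨a, hli.subset_extend _ ha⟩ = a := Module.Basis.extend_apply_self hli _
  conv_lhs => rw [← hB]
  exact B.constr_basis ℝ _ _

lemma inner_sum_coeff (d : V) (c : V →₀ ℤ) :
    ⟪d, c.sum fun β n => (n : ℝ) • β⟫ = ∑ β ∈ c.support, (c β : ℝ) * ⟪d, β⟫ := by
  simp only [Finsupp.sum, inner_sum, inner_smul_right]

lemma posRoots_inner_nonneg {d β : V} (hd : ∀ a ∈ Φ, 0 ≤ ⟪d, a⟫) (hβ : β ∈ posRoots Δ Φ) :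
    0 ≤ ⟪d, β⟫ := by
  obtain ⟨-, c, hc, hc0, rfl⟩ := hβ
  rw [inner_sum_coeff]
  exact Finset.sum_nonneg fun a ha => mul_nonneg (by exact_mod_cast hc0 a) (hd a (hc ha))

/-- If `d` is nonnegative on `Φ` and vanishes at most at `α`, the positive roots orthogonal to `d`
are multiples of `α`. -/
lemma posRoots_eq_smul {d α β : V} (hd : ∀ a ∈ Φ, 0 ≤ ⟪d, a⟫)
    (hd' : ∀ a ∈ Φ, a ≠ α → ⟪d, a⟫ ≠ 0) (hβ : β ∈ posRoots Δ Φ) (h0 : ⟪d, β⟫ = 0) :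
    ∃ m : ℝ, 0 ≤ m ∧ β = m • α := by
  obtain ⟨-, c, hc, hc0, rfl⟩ := hβ
  rw [inner_sum_coeff, Finset.sum_eq_zero_iff_of_nonneg fun a ha =>
    mul_nonneg (by exact_mod_cast hc0 a) (hd a (hc ha))] at h0
  refine ⟨c α, by exact_mod_cast hc0 α, ?_⟩
  rw [Finsupp.sum]
  refine Finset.sum_eq_single α (fun a ha hne => ?_) (fun h => ?_)
  · have := (mul_eq_zero.1 (h0 a ha)).resolve_right (hd' a (hc ha) hne)
    rw [this, zero_smul]
  · rw [Finsupp.notMem_support_iff.1 h, Int.cast_zero, zero_smul]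

/-- A vector `d` with inner product `1` with every simple root cuts out the positive roots. -/
lemma mem_posRoots_iff (hΔ : IsReducedRootSystem (fun x y => ⟪x, y⟫) Δ)
    (hΦ : IsFundamentalSystem Δ Φ) {d : V} (hd : ∀ a ∈ Φ, ⟪d, a⟫ = 1) {β : V} (hβ : β ∈ Δ) :
    ⟪d, β⟫ ≠ 0 ∧ (β ∈ posRoots Δ Φ ↔ 0 < ⟪d, β⟫) := by
  have key (γ : V) (hγ : γ ∈ posRoots Δ Φ) : 0 < ⟪d, γ⟫ := by
    refine lt_of_le_of_ne (posRoots_inner_nonneg (fun a ha => by rw [hd a ha]; exact zero_le_one)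
      hγ) fun h => ?_
    obtain ⟨m, -, hm⟩ := posRoots_eq_smul (α := 0)
      (fun a ha => by rw [hd a ha]; exact zero_le_one)
      (fun a ha _ => by rw [hd a ha]; exact one_ne_zero) hγ h.symm
    exact hΔ.ne_zero hγ.1 (by simpa using hm)
  rcases hΦ.2.2 β hβ with h | h
  · exact ⟨(key β h).ne', fun _ => key β h, fun _ => h⟩
  · have := key _ h
    rw [inner_neg_right] at this
    exact ⟨by linarith, fun h' => key β h', fun h' => by linarith⟩

/-- A simple reflection permutes the positive roots other than the simple root itself. -/
lemma simple_refl_pos [FiniteDimensional ℝ V] (hΔ : IsReducedRootSystem (fun x y => ⟪x, y⟫) Δ)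
    (hΦ : IsFundamentalSystem Δ Φ) {d : V} (hd : ∀ a ∈ Φ, ⟪d, a⟫ = 1) {α β : V} (hα : α ∈ Φ)
    (hβ : β ∈ Δ) (hpos : 0 < ⟪d, β⟫) (hne : β ≠ α) : 0 < ⟪d, rootRefl α β⟫ := by
  classical
  -- `e` measures the contribution of the simple roots other than `α`, unchanged by `w_α`
  obtain ⟨e, he⟩ := exists_inner_eq hΦ fun a => if a = α then 0 else 1
  have he0 : ∀ a ∈ Φ, 0 ≤ ⟪e, a⟫ := fun a ha => by rw [he a ha]; split_ifs <;> norm_num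
  have he1 : ∀ a ∈ Φ, a ≠ α → ⟪e, a⟫ ≠ 0 := fun a ha h => by rw [he a ha, if_neg h]; norm_num
  have hβp := (mem_posRoots_iff hΔ hΦ hd hβ).2.2 hpos
  have heβ : 0 < ⟪e, β⟫ := by
    refine lt_of_le_of_ne (posRoots_inner_nonneg he0 hβp) fun h => ?_
    obtain ⟨m, hm0, hm⟩ := posRoots_eq_smul he0 he1 hβp h.symm
    rcases hΔ.2.2.2.2 α (hΦ.1 hα) β hβ m hm with rfl | rfl
    · exact hne (by simpa using hm)
    · linarith
  have hmem := hΔ.rootRefl_mem (hΦ.1 hα) hβ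
  have heq : ⟪e, rootRefl α β⟫ = ⟪e, β⟫ := by
    rw [rootRefl_apply, inner_sub_right, inner_smul_right, he α hα, if_pos rfl]; ring
  rw [← (mem_posRoots_iff hΔ hΦ hd hmem).2]
  refine (hΦ.2.2 _ hmem).resolve_right fun h => ?_
  have := posRoots_inner_nonneg he0 h
  rw [inner_neg_right] at this
  linarith

/-- The reflection in a positive root is generated by the simple reflections, by induction on the
height `⟪d, β⟫`. -/
lemma rootRefl_mem_closure_simple [FiniteDimensional ℝ V]
    (hΔ : IsReducedRootSystem (fun x y => ⟪x, y⟫) Δ)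
    (hΦ : IsFundamentalSystem Δ Φ) {d : V} (hd : ∀ a ∈ Φ, ⟪d, a⟫ = 1) {β : V}
    (hβ : β ∈ Δ) (hpos : 0 < ⟪d, β⟫) : rootRefl β ∈ Subgroup.closure (rootRefl '' Φ) := by
  by_contra hcon
  obtain ⟨γ, ⟨hγ, hγpos, hγG⟩, hmin⟩ := Set.exists_min_image
    {γ | γ ∈ Δ ∧ 0 < ⟪d, γ⟫ ∧ rootRefl γ ∉ Subgroup.closure (rootRefl '' Φ)} (fun γ => ⟪d, γ⟫)
    (hΔ.1.subset fun γ h => h.1) ⟨β, hβ, hpos, hcon⟩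
  obtain ⟨α, hα, hγα⟩ : ∃ α ∈ Φ, 0 < ⟪γ, α⟫ := by
    by_contra! h
    have := posRoots_inner_nonneg (d := -γ) (fun a ha => by
      rw [inner_neg_left]; linarith [h a ha]) ((mem_posRoots_iff hΔ hΦ hd hγ).2.2 hγpos)
    rw [inner_neg_left] at this
    linarith [hΔ.inner_self_pos hγ]
  have hαG : rootRefl α ∈ Subgroup.closure (rootRefl '' Φ) :=
    Subgroup.subset_closure ⟨α, hα, rfl⟩
  have hne : γ ≠ α := fun h => hγG (h ▸ hαG)
  have hpos' := simple_refl_pos hΔ hΦ hd hα hγ hγpos hne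
  have hlt : ⟪d, rootRefl α γ⟫ < ⟪d, γ⟫ := by
    rw [rootRefl_apply, inner_sub_right, inner_smul_right, hd α hα, mul_one, sub_lt_self_iff]
    rw [real_inner_comm] at hγα
    exact div_pos (by linarith) (hΔ.inner_self_pos (hΦ.1 hα))
  have hG : rootRefl (rootRefl α γ) ∈ Subgroup.closure (rootRefl '' Φ) := by
    by_contra h
    exact (hmin _ ⟨hΔ.rootRefl_mem (hΦ.1 hα) hγ, hpos', h⟩).not_gt hlt
  rw [rootRefl_conj _ (inner_rootRefl α)] at hG
  exact hγG (by simpa [mul_mem_cancel_left hαG, mul_mem_cancel_right hαG, rootRefl_inv] using hG)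

lemma weyl_le_closure_simple [FiniteDimensional ℝ V]
    (hΔ : IsReducedRootSystem (fun x y => ⟪x, y⟫) Δ)
    (hΦ : IsFundamentalSystem Δ Φ) {d : V} (hd : ∀ a ∈ Φ, ⟪d, a⟫ = 1) :
    WeylGroup (fun x y => ⟪x, y⟫) Δ ≤ Subgroup.closure (rootRefl '' Φ) := by
  refine (Subgroup.closure_le _).2 ?_
  rintro w ⟨α, hα, hw⟩
  have : w = rootRefl α := by ext x; rw [hw, rootRefl_apply]
  subst this
  rcases lt_or_gt_of_ne (mem_posRoots_iff hΔ hΦ hd hα).1 with h | h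
  · rw [← rootRefl_neg]
    exact rootRefl_mem_closure_simple hΔ hΦ hd (hΔ.neg_mem hα) (by rw [inner_neg_right]; linarith)
  · exact rootRefl_mem_closure_simple hΔ hΦ hd hα h

lemma exists_simple_word {w : V ≃ₗ[ℝ] V} (hw : w ∈ Subgroup.closure (rootRefl '' Φ)) :
    ∃ l : List V, (∀ a ∈ l, a ∈ Φ) ∧ w = (l.map rootRefl).prod := by
  induction hw using Subgroup.closure_induction_left with
  | one => exact ⟨[], by simp, by simp⟩
  | mul_left x hx y _ ih =>
    obtain ⟨a, ha, rfl⟩ := hx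
    obtain ⟨l, hl, rfl⟩ := ih
    exact ⟨a :: l, by simpa using ⟨ha, hl⟩, by simp⟩
  | inv_mul_cancel x hx y _ ih =>
    obtain ⟨a, ha, rfl⟩ := hx
    obtain ⟨l, hl, rfl⟩ := ih
    exact ⟨a :: l, by simpa using ⟨ha, hl⟩, by simp [rootRefl_inv]⟩

lemma word_mem_weyl (hΦ : Φ ⊆ Δ) {l : List V} (hl : ∀ a ∈ l, a ∈ Φ) :
    (l.map rootRefl).prod ∈ WeylGroup (fun x y => ⟪x, y⟫) Δ := by
  refine list_prod_mem fun x hx => ?_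
  obtain ⟨a, ha, rfl⟩ := List.mem_map.1 hx
  exact rootRefl_mem_weyl (hΦ (hl a ha))

/-- The exchange condition: if the word `l` sends the simple root `β` to a negative root,
then appending `w_β` to `l` amounts to deleting one of its letters. -/
lemma exchange [FiniteDimensional ℝ V] (hΔ : IsReducedRootSystem (fun x y => ⟪x, y⟫) Δ)
    (hΦ : IsFundamentalSystem Δ Φ) {d : V} (hd : ∀ a ∈ Φ, ⟪d, a⟫ = 1) {β : V} (hβ : β ∈ Φ)
    (l : List V) (hl : ∀ a ∈ l, a ∈ Φ) (hneg : ⟪d, (l.map rootRefl).prod β⟫ < 0) :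
    ∃ l' : List V, (∀ a ∈ l', a ∈ Φ) ∧ l'.length < l.length ∧
      (l.map rootRefl).prod * rootRefl β = (l'.map rootRefl).prod := by
  induction l with
  | nil =>
    have : ⟪d, β⟫ < 0 := by simpa using hneg
    rw [hd β hβ] at this
    linarith
  | cons a t ih =>
    have ht : ∀ b ∈ t, b ∈ Φ := fun b hb => hl b (List.mem_cons_of_mem _ hb)
    have ha : a ∈ Φ := hl a List.mem_cons_self
    have htW := word_mem_weyl hΦ.1 ht
    have hmem : (t.map rootRefl).prod β ∈ Δ := (weyl_mem_iff hΔ htW _).2 (hΦ.1 hβ)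
    rw [List.map_cons, List.prod_cons] at hneg ⊢
    rcases lt_or_gt_of_ne (mem_posRoots_iff hΔ hΦ hd hmem).1 with h | h
    · obtain ⟨l', hl', hlen, heq⟩ := ih ht h
      exact ⟨a :: l', by simpa using ⟨ha, hl'⟩, by simpa using hlen,
        by rw [mul_assoc, heq, List.map_cons, List.prod_cons]⟩
    · have hta : (t.map rootRefl).prod β = a := by
        by_contra hne
        exact (simple_refl_pos hΔ hΦ hd ha hmem h hne).not_gt hneg
      refine ⟨t, ht, by simp, ?_⟩
      rw [← hta, rootRefl_conj _ (weyl_isometry htW)]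
      simp [mul_assoc, rootRefl_mul_self]

/-- The Weyl group acts freely on positive systems. -/
lemma weyl_eq_one [FiniteDimensional ℝ V] (hΔ : IsReducedRootSystem (fun x y => ⟪x, y⟫) Δ)
    (hΦ : IsFundamentalSystem Δ Φ) {d : V} (hd : ∀ a ∈ Φ, ⟪d, a⟫ = 1) {w : V ≃ₗ[ℝ] V}
    (hw : w ∈ WeylGroup (fun x y => ⟪x, y⟫) Δ) (hpos : ∀ a ∈ Φ, 0 < ⟪d, w a⟫) : w = 1 := by
  obtain ⟨l, hl, rfl⟩ := exists_simple_word (weyl_le_closure_simple hΔ hΦ hd hw)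
  clear hw
  induction hk : l.length using Nat.strong_induction_on generalizing l with
  | _ k ih =>
    rcases List.eq_nil_or_concat l with rfl | ⟨t, b, rfl⟩
    · simp
    · have hb : b ∈ Φ := hl b (by simp)
      have ht : ∀ a ∈ t, a ∈ Φ := fun a ha => hl a (by simp [ha])
      have hprod : ((t ++ [b]).map rootRefl).prod = (t.map rootRefl).prod * rootRefl b := by simp
      have hneg : ⟪d, (t.map rootRefl).prod b⟫ < 0 := by
        have h := hpos b hb
        rw [List.concat_eq_append, hprod, LinearEquiv.mul_apply, rootRefl_self, map_neg,
          inner_neg_right] at h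
        linarith
      obtain ⟨l', hl', hlen, heq⟩ := exchange hΔ hΦ hd hb t ht hneg
      rw [List.concat_eq_append, hprod, heq] at hpos ⊢
      exact ih l'.length (by simp at hk; omega) l' hl' hpos rfl

end Freeness

/-! ### Transport along isomorphisms and comparison of the two notions of isomorphism -/

section Transport

variable {V : Type*} [NormedAddCommGroup V] [InnerProductSpace ℝ V]
  {V' : Type*} [NormedAddCommGroup V'] [InnerProductSpace ℝ V']

lemma IsSigmaFundamental.isSigmaRegular {Δ Φ : Set V} {σ : V →ₗ[ℝ] V}
    (hΔ : IsReducedRootSystem (fun x y => ⟪x, y⟫) Δ)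
    (hσ : IsSigmaSystem (fun x y => ⟪x, y⟫) Δ σ)
    (hΦ : IsSigmaFundamental Δ Φ σ) {d : V} (hd : ∀ a ∈ Φ, ⟪d, a⟫ = 1) :
    IsSigmaRegular Δ σ d := by
  refine ⟨fun α hα => (mem_posRoots_iff hΔ hΦ.1 hd hα).1, fun α hα hpos hne => ?_⟩
  have hσα : σ α ∈ Δ := hσ.2.2 ▸ Set.mem_image_of_mem σ hα
  exact (mem_posRoots_iff hΔ hΦ.1 hd hσα).2.1
    (hΦ.2 α ((mem_posRoots_iff hΔ hΦ.1 hd hα).2.2 hpos) hne)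

/-- Positive systems are transported along a root system isomorphism `φ`, which need not be an
isometry; the adjoint of `φ⁻¹` carries the defining vector along. -/
lemma IsSigmaRegular.transport [FiniteDimensional ℝ V] [FiniteDimensional ℝ V']
    {Δ : Set V} {σ : V →ₗ[ℝ] V} {Δ' : Set V'} {τ : V' →ₗ[ℝ] V'} {d : V}
    (hd : IsSigmaRegular Δ σ d) (φ : V ≃ₗ[ℝ] V') (hφ : φ '' Δ = Δ')
    (hτ : ∀ x, τ (φ x) = φ (σ x)) :
    IsSigmaRegular Δ' τ (LinearMap.adjoint φ.symm.toLinearMap d) := by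
  subst hφ
  have key (x : V) : ⟪LinearMap.adjoint φ.symm.toLinearMap d, φ x⟫ = ⟪d, x⟫ := by
    rw [LinearMap.adjoint_inner_left]; simp
  constructor
  · rintro _ ⟨α, hα, rfl⟩
    rw [key]; exact hd.1 α hα
  · rintro _ ⟨α, hα, rfl⟩ hpos hne
    rw [key] at hpos
    rw [hτ, key]
    exact hd.2 α hα hpos fun h => hne (by rw [hτ, h, map_neg])

/-- Two applications of transitivity produce `u` commuting with `σ₁'` and `v` commuting with `σ₂'`
such that `v * w * u⁻¹` preserves the positive system of `V'`; freeness then gives `v * w = u`, and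
`φ` followed by `u` conjugates both involutions. -/
lemma strict_iso_of_iso [FiniteDimensional ℝ V] [FiniteDimensional ℝ V']
    {Δ : Set V} {σ₁ σ₂ : V →ₗ[ℝ] V} {Δ' : Set V'} {σ₁' σ₂' : V' →ₗ[ℝ] V'}
    (hΔ : IsReducedRootSystem (fun x y => ⟪x, y⟫) Δ)
    (hΔ' : IsReducedRootSystem (fun x y => ⟪x, y⟫) Δ')
    (hσ₁ : IsSigmaSystem (fun x y => ⟪x, y⟫) Δ σ₁)
    (hσ₂ : IsSigmaSystem (fun x y => ⟪x, y⟫) Δ σ₂)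
    (hσ₁' : IsSigmaSystem (fun x y => ⟪x, y⟫) Δ' σ₁')
    (hσ₂' : IsSigmaSystem (fun x y => ⟪x, y⟫) Δ' σ₂')
    (hn₁' : IsNormalSigma Δ' σ₁') (hn₂' : IsNormalSigma Δ' σ₂')
    (hc : IsCanonicalDoubleSigma Δ σ₁ σ₂) (hc' : IsCanonicalDoubleSigma Δ' σ₁' σ₂')
    (h : DoubleSigmaIso (fun x y => ⟪x, y⟫) Δ σ₁ σ₂ Δ' σ₁' σ₂') :
    ∃ φ : V ≃ₗ[ℝ] V', φ '' Δ = Δ' ∧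
      σ₁' = φ.toLinearMap ∘ₗ σ₁ ∘ₗ φ.symm.toLinearMap ∧
      σ₂' = φ.toLinearMap ∘ₗ σ₂ ∘ₗ φ.symm.toLinearMap := by
  obtain ⟨φ, hφ, h1, w, hw, h2⟩ := h
  obtain ⟨Φ, hΦ₁, hΦ₂⟩ := hc
  obtain ⟨Φ', hΦ₁', hΦ₂'⟩ := hc'
  obtain ⟨d₀, hd₀⟩ := exists_inner_eq hΦ₁.1 fun _ => 1
  obtain ⟨d', hd'⟩ := exists_inner_eq hΦ₁'.1 fun _ => 1
  set d := LinearMap.adjoint φ.symm.toLinearMap d₀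
  have hreg₁ : IsSigmaRegular Δ' σ₁' d :=
    (hΦ₁.isSigmaRegular hΔ hσ₁ hd₀).transport φ hφ (by simp [h1])
  have hreg₂ : IsSigmaRegular Δ' (φ.toLinearMap ∘ₗ σ₂ ∘ₗ φ.symm.toLinearMap) d :=
    (hΦ₂.isSigmaRegular hΔ hσ₂ hd₀).transport φ hφ (by simp)
  have hwσ (x : V') : σ₂' (w x) = w ((φ.toLinearMap ∘ₗ σ₂ ∘ₗ φ.symm.toLinearMap) x) := by
    simp [h2]
  obtain ⟨u, huW, huσ, hu⟩ := exists_commuting_weyl hΔ' hσ₁' hn₁'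
    (hΦ₁'.isSigmaRegular hΔ' hσ₁' hd') hreg₁
  obtain ⟨v, hvW, hvσ, hv⟩ := exists_commuting_weyl hΔ' hσ₂' hn₂'
    (hΦ₂'.isSigmaRegular hΔ' hσ₂' hd') (hreg₂.map hΔ' hw hwσ)
  have hgW : v * w * u⁻¹ ∈ WeylGroup (fun x y => ⟪x, y⟫) Δ' :=
    mul_mem (mul_mem hvW hw) (inv_mem huW)
  have hg : v * w * u⁻¹ = 1 := by
    refine weyl_eq_one hΔ' hΦ₁'.1 hd' hgW fun a ha => ?_
    have haΔ := hΦ₁'.1.1 ha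
    have hgaΔ := (weyl_mem_iff hΔ' hgW a).2 haΔ
    by_contra hneg
    have hlt := lt_of_le_of_ne (not_lt.1 hneg) (mem_posRoots_iff hΔ' hΦ₁'.1 hd' hgaΔ).1
    have e1 := hv _ (hΔ'.neg_mem hgaΔ) (by rw [inner_neg_right]; linarith)
    have e2 := hu a haΔ (by rw [hd' a ha]; exact one_pos)
    have e3 : v (w d) = (v * w * u⁻¹) (u d) := by
      change v (w d) = v (w (u.symm (u d))); simp
    rw [e3, inner_neg_right, weyl_isometry hgW] at e1
    linarith
  have hvw (x : V') : v (w x) = u x :=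
    congrArg (fun f : V' ≃ₗ[ℝ] V' => f x) (mul_inv_eq_one.1 hg)
  refine ⟨φ.trans u, ?_, ?_, ?_⟩
  · subst hφ
    ext x
    constructor
    · rintro ⟨y, hy, rfl⟩
      exact (weyl_mem_iff hΔ' huW _).2 ⟨y, hy, rfl⟩
    · intro hx
      obtain ⟨y, rfl⟩ := (φ.trans u).surjective x
      obtain ⟨z, hz, hzy⟩ := (weyl_mem_iff hΔ' huW (φ y)).1 hx
      exact ⟨z, hz, by simp [hzy]⟩
  · ext x
    obtain ⟨y, rfl⟩ := (φ.trans u).surjective x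
    simp only [LinearMap.comp_apply, LinearEquiv.coe_coe, LinearEquiv.symm_apply_apply]
    rw [LinearEquiv.trans_apply, huσ, h1]
    simp
  · ext x
    obtain ⟨y, rfl⟩ := (φ.trans u).surjective x
    simp only [LinearMap.comp_apply, LinearEquiv.coe_coe, LinearEquiv.symm_apply_apply]
    rw [LinearEquiv.trans_apply, ← hvw, hvσ, hwσ, hvw]
    simp

lemma iso_of_strict_iso {Δ : Set V} {σ₁ σ₂ : V →ₗ[ℝ] V} {Δ' : Set V'} {σ₁' σ₂' : V' →ₗ[ℝ] V'}
    (h : ∃ φ : V ≃ₗ[ℝ] V', φ '' Δ = Δ' ∧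
      σ₁' = φ.toLinearMap ∘ₗ σ₁ ∘ₗ φ.symm.toLinearMap ∧
      σ₂' = φ.toLinearMap ∘ₗ σ₂ ∘ₗ φ.symm.toLinearMap) :
    DoubleSigmaIso (fun x y => ⟪x, y⟫) Δ σ₁ σ₂ Δ' σ₁' σ₂' := by
  obtain ⟨φ, hφ, h1, h2⟩ := h
  refine ⟨φ, hφ, h1, 1, one_mem _, ?_⟩
  rw [h2]
  rfl

lemma invariants_eq_of_strict_iso {σ₁ σ₂ : V →ₗ[ℝ] V} {σ₁' σ₂' : V' →ₗ[ℝ] V'} (φ : V ≃ₗ[ℝ] V')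
    (h1 : σ₁' = φ.toLinearMap ∘ₗ σ₁ ∘ₗ φ.symm.toLinearMap)
    (h2 : σ₂' = φ.toLinearMap ∘ₗ σ₂ ∘ₗ φ.symm.toLinearMap) :
    Module.finrank ℝ ↥(fixedSpace σ₁ ⊓ fixedSpace σ₂)
        = Module.finrank ℝ ↥(fixedSpace σ₁' ⊓ fixedSpace σ₂') ∧
      orderOf (σ₁ ∘ₗ σ₂ : Module.End ℝ V) = orderOf (σ₁' ∘ₗ σ₂' : Module.End ℝ V') := by
  subst h1 h2
  constructor
  · have h : (fixedSpace σ₁ ⊓ fixedSpace σ₂).map φ.toLinearMap =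
        fixedSpace (φ.toLinearMap ∘ₗ σ₁ ∘ₗ φ.symm.toLinearMap) ⊓
          fixedSpace (φ.toLinearMap ∘ₗ σ₂ ∘ₗ φ.symm.toLinearMap) := by
      ext x
      obtain ⟨y, rfl⟩ := φ.surjective x
      simp [fixedSpace, sub_eq_zero]
    rw [← h]
    exact (φ.finrank_map_eq _).symm
  · rw [← MulEquiv.orderOf_eq φ.conjRingEquiv.toMulEquiv]
    congr 1
    ext x
    simp

end Transport

/-- Theorem 4.8: two canonical normal double `σ`-systems are isomorphic iff
they are strictly isomorphic (a single root-system isomorphism conjugating both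
involutions); in that case the dimensions `dim(𝔱^{σ₁} ∩ 𝔱^{σ₂})` and the orders
`ord(σ₁σ₂)` agree. -/
theorem canonical_double_sigma_iso_iff
    {V : Type*} [NormedAddCommGroup V] [InnerProductSpace ℝ V] [FiniteDimensional ℝ V]
    {V' : Type*} [NormedAddCommGroup V'] [InnerProductSpace ℝ V'] [FiniteDimensional ℝ V']
    (Δ : Set V) (σ₁ σ₂ : V →ₗ[ℝ] V)
    (Δ' : Set V') (σ₁' σ₂' : V' →ₗ[ℝ] V')
    (hΔ : IsReducedRootSystem (fun x y => ⟪x, y⟫) Δ)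
    (hΔ' : IsReducedRootSystem (fun x y => ⟪x, y⟫) Δ')
    (hσ₁ : IsSigmaSystem (fun x y => ⟪x, y⟫) Δ σ₁)
    (hσ₂ : IsSigmaSystem (fun x y => ⟪x, y⟫) Δ σ₂)
    (hσ₁' : IsSigmaSystem (fun x y => ⟪x, y⟫) Δ' σ₁')
    (hσ₂' : IsSigmaSystem (fun x y => ⟪x, y⟫) Δ' σ₂')
    (hn₁ : IsNormalSigma Δ σ₁) (hn₂ : IsNormalSigma Δ σ₂)
    (hn₁' : IsNormalSigma Δ' σ₁') (hn₂' : IsNormalSigma Δ' σ₂')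
    (hc : IsCanonicalDoubleSigma Δ σ₁ σ₂)
    (hc' : IsCanonicalDoubleSigma Δ' σ₁' σ₂') :
    (DoubleSigmaIso (fun x y => ⟪x, y⟫) Δ σ₁ σ₂ Δ' σ₁' σ₂' ↔
      ∃ φ : V ≃ₗ[ℝ] V', φ '' Δ = Δ' ∧
        σ₁' = φ.toLinearMap ∘ₗ σ₁ ∘ₗ φ.symm.toLinearMap ∧
        σ₂' = φ.toLinearMap ∘ₗ σ₂ ∘ₗ φ.symm.toLinearMap) ∧
    (DoubleSigmaIso (fun x y => ⟪x, y⟫) Δ σ₁ σ₂ Δ' σ₁' σ₂' →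
      Module.finrank ℝ ↥(fixedSpace σ₁ ⊓ fixedSpace σ₂)
        = Module.finrank ℝ ↥(fixedSpace σ₁' ⊓ fixedSpace σ₂') ∧
      orderOf (σ₁ ∘ₗ σ₂ : Module.End ℝ V) = orderOf (σ₁' ∘ₗ σ₂' : Module.End ℝ V')) := by
  refine ⟨⟨strict_iso_of_iso hΔ hΔ' hσ₁ hσ₂ hσ₁' hσ₂' hn₁' hn₂' hc hc', iso_of_strict_iso⟩,
    fun h => ?_⟩
  obtain ⟨φ, -, h1, h2⟩ := strict_iso_of_iso hΔ hΔ' hσ₁ hσ₂ hσ₁' hσ₂' hn₁' hn₂' hc hc' h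
  exact invariants_eq_of_strict_iso φ h1 h2
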